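/- Let r ≥ 3 and F_r(s) = ∑_{k_1=1}^∞ ⋯ ∑_{k_r=1}^∞ Λ(k_1) ⋯ Λ(k_r) (k_1 + ⋯ + k_r)^{-s}, which converges absolutely for Re s > r. Assume RH, and assume that the line Re s = 1 is a natural boundary for F_2, i.e. for every s_0 with Re s_0 = 1 there is no open connected set U ∋ s_0 with U ∩ {Re s > 2} ≠ ∅ carrying a meromorphic function g with g(s) = ∑_{k,l≥1} Λ(k)Λ(l)(k+l)^{-s} for all s ∈ U with Re s > 2. Then the line Re s = r − 1 is a natural boundary for F_r: for every s_0 ∈ ℂ with Re s_0 = r − 1, there do not exist an open connected set U ⊆ ℂ with s_0 ∈ U and U ∩ {s : Re s > r} ≠ ∅, and a function g meromorphic on U, such that g(s) = F_r(s) for every s ∈ U with Re s > r. -/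

import Mathlib

/-!
Let `S(t) = ∑ Λ(n) e^{-nt}`. The Mellin transform of `S^r` is `Γ(s) F_r(s)` for `Re s > r`
(`mellin_lambdaSeries_pow`), so relations among powers of `S` become relations among the `F_r`.

Put `u(t) = t S(t) - 1`. Expanding `S^r = t^{-r} (1 + u)^r` to second order in `u` and rewriting
`1, u, u²` through `1, S, S²` gives, for `0 < t ≤ 1`,
`S^r = (r(r-1)/2) t^{2-r} S² + c₁ t^{1-r} S + c₀ t^{-r} + R(t)` with `R = O(t^{-r} u³)`.
Taking Mellin transforms (`mellin_remainder`), `Γ(s) F_r(s)` equals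
`(r(r-1)/2) Γ(w) F₂(w)` with `w = s - r + 2`, plus terms meromorphic in a half-plane `Re w > 4/5`
(involving `Γ`, `ζ'/ζ(w - 1)` and a simple pole), plus the Mellin transform of `R`. Under RH
`u = O(t^{2/5})` as `t → 0⁺` (`isBigO_relError`), so `R = O(t^{-(r - 6/5)})` and its Mellin
transform is holomorphic for `Re s > r - 6/5` (`differentiableAt_mellin_remainder`), that is for
`Re w > 4/5`. Since `Γ(w)` has no zeros, a meromorphic continuation of `F_r` to a point of
`Re s = r - 1` produces one of `F₂` to a point of `Re w = 1`. The given connected open set need not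
stay in `Re s > r - 6/5`, but a connected component of its intersection with this half-plane still
reaches the line (`exists_connected_subset`).

The bound on `u` comes from Mellin inversion of `S(t) - e^{-t}/t`, whose transform is
`-Γ(s) ζ₁'(s)/ζ₁(s)` with `ζ₁(s) = (s - 1) ζ(s)` entire, and a shift of the contour from `Re s = 2` to
`Re s = 3/5`. Under RH, `ζ₁` has no zeros there and its logarithmic derivative grows polynomially
by Borel-Carathéodory (`exists_norm_logDeriv_zeta₁_le`), while `Γ` decays faster than any power.
-/

open ArithmeticFunction

/-- The `r`-fold Goldbach generating Dirichlet series
`F_r(s) = ∑_{k_1,…,k_r ≥ 1} Λ(k_1)⋯Λ(k_r) (k_1+⋯+k_r)^{-s}`. -/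
noncomputable def goldbachF (r : ℕ) (s : ℂ) : ℂ :=
  ∑' k : Fin r → ℕ,
    (∏ i : Fin r, (Λ (k i + 1) : ℂ)) / ((∑ i : Fin r, (k i + 1) : ℕ) : ℂ) ^ s

namespace GoldbachBoundary

open Complex MeasureTheory Set Filter Asymptotics Topology

/-! ### Growth of `(s - 1) ζ(s)` -/

/-- The fractional part `{t}` on `(1, ∞)`, zero elsewhere. Its Mellin transform at `-s` is the
integral in the classical continuation of `ζ` to `Re s > 0`. -/
noncomputable def fractTail (t : ℝ) : ℂ :=
  (Ioi (1 : ℝ)).indicator (fun t => ((Int.fract t : ℝ) : ℂ)) t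

lemma measurable_fractTail : Measurable fractTail :=
  Measurable.indicator (Complex.measurable_ofReal.comp measurable_fract) measurableSet_Ioi

lemma norm_fractTail_le (t : ℝ) : ‖fractTail t‖ ≤ 1 := by
  unfold fractTail
  by_cases h : t ∈ Ioi (1:ℝ)
  · rw [indicator_of_mem h, Complex.norm_real, Real.norm_of_nonneg (Int.fract_nonneg _)]
    exact (Int.fract_lt_one _).le
  · rw [indicator_of_notMem h]; simp

lemma locallyIntegrableOn_fractTail : LocallyIntegrableOn fractTail (Ioi 0) := by
  refine LocallyIntegrable.locallyIntegrableOn ?_ _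
  refine (locallyIntegrable_const (1:ℝ)).mono measurable_fractTail.aestronglyMeasurable ?_
  exact ae_of_all _ fun t => by simpa using norm_fractTail_le t

lemma differentiableAt_mellin_fractTail {s : ℂ} (hs : 0 < s.re) :
    DifferentiableAt ℂ (fun s => mellin fractTail (-s)) s := by
  have : DifferentiableAt ℂ (mellin fractTail) (-s) := by
    refine mellin_differentiableAt_of_isBigO_rpow (a := 0) (b := -s.re - 1)
      locallyIntegrableOn_fractTail ?_ (by simpa using hs) ?_ (by simp)
    · refine IsBigO.of_bound 1 (Eventually.of_forall fun t => ?_)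
      simpa using norm_fractTail_le t
    · refine IsBigO.of_bound 1 ?_
      filter_upwards [Ioo_mem_nhdsGT (show (0:ℝ) < 1 by norm_num)] with t ht
      rw [fractTail, indicator_of_notMem (by simpa using ht.2.le)]
      simp
  exact this.comp s (by fun_prop)

lemma mellin_fractTail_eq (s : ℂ) :
    mellin fractTail (-s) = ∫ t in Ioi (1:ℝ), (t:ℂ) ^ (-s - 1) * ((Int.fract t : ℝ) : ℂ) := by
  unfold mellin
  rw [← integral_indicator measurableSet_Ioi, ← integral_indicator measurableSet_Ioi]
  congr 1; ext t
  by_cases h : 1 < t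
  · simp [fractTail, h, (zero_lt_one.trans h)]
  · by_cases h0 : 0 < t <;> simp [fractTail, h, h0]

lemma norm_mellin_fractTail_le {s : ℂ} (hs : 0 < s.re) :
    ‖mellin fractTail (-s)‖ ≤ 1 / s.re := by
  have h1 := mellin_fractTail_eq s
  rw [h1]
  refine (norm_integral_le_of_norm_le (g := fun t : ℝ => t ^ (-s.re - 1))
    (integrableOn_Ioi_rpow_of_lt (by linarith) one_pos) ?_).trans ?_
  · refine (ae_restrict_iff' measurableSet_Ioi).2 (ae_of_all _ fun t (ht : 1 < t) => ?_)
    rw [norm_mul, Complex.norm_cpow_eq_rpow_re_of_pos (by linarith), Complex.norm_real,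
      Real.norm_of_nonneg (Int.fract_nonneg _)]
    simpa using mul_le_of_le_one_right (by positivity) (Int.fract_lt_one t).le
  · rw [integral_Ioi_rpow_of_lt (by linarith) one_pos]
    simp

/-- Partial summation: `ζ(s) = s/(s-1) - s ∫_1^∞ {t} t^{-s-1} dt`. -/
lemma zeta_eq_of_one_lt {s : ℂ} (hs : 1 < s.re) :
    riemannZeta s = s / (s - 1) - s * mellin fractTail (-s) := by
  have hs1 : s - 1 ≠ 0 := by
    intro h; rw [sub_eq_zero] at h; rw [h] at hs; simp at hs
  have h := LSeries_eq_mul_integral' (1 : ℕ → ℂ) (r := 1) zero_le_one hs (by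
    refine IsBigO.of_bound 1 (Eventually.of_forall fun n => ?_); simp)
  rw [LSeries_one_eq_riemannZeta hs] at h
  have h1 := mellin_fractTail_eq s
  have h2 : IntegrableOn (fun t : ℝ => (t:ℂ) ^ (-s - 1) * ((Int.fract t : ℝ) : ℂ)) (Ioi 1) := by
    refine Integrable.mono' (g := fun t : ℝ => t ^ (-s.re - 1))
      (integrableOn_Ioi_rpow_of_lt (by linarith) one_pos) ?_ ?_
    · refine Measurable.aestronglyMeasurable ?_
      exact (by fun_prop : Measurable fun t : ℝ => (t:ℂ) ^ (-s - 1)).mul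
        (Complex.measurable_ofReal.comp measurable_fract)
    · refine (ae_restrict_iff' measurableSet_Ioi).2 (ae_of_all _ fun t (ht : 1 < t) => ?_)
      rw [norm_mul, Complex.norm_cpow_eq_rpow_re_of_pos (by linarith), Complex.norm_real,
        Real.norm_of_nonneg (Int.fract_nonneg _)]
      simpa using mul_le_of_le_one_right (by positivity) (Int.fract_lt_one t).le
  have h3 : IntegrableOn (fun t : ℝ => (t:ℂ) ^ (-s)) (Ioi 1) :=
    integrableOn_Ioi_cpow_of_lt (by simpa using hs) one_pos
  have h4 : ∫ t in Ioi (1:ℝ), (∑ k ∈ Finset.Icc 1 ⌊t⌋₊, (1 : ℕ → ℂ) k) * (t:ℂ) ^ (-(s + 1))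
      = ∫ t in Ioi (1:ℝ), ((t:ℂ) ^ (-s) - (t:ℂ) ^ (-s - 1) * ((Int.fract t : ℝ) : ℂ)) := by
    refine setIntegral_congr_fun measurableSet_Ioi fun t (ht : 1 < t) => ?_
    have ht0 : (t:ℂ) ≠ 0 := by exact_mod_cast (by linarith : t ≠ 0)
    have h5 : ((⌊t⌋₊ : ℕ) : ℂ) = t - Int.fract t := by
      have : ((⌊t⌋₊ : ℕ) : ℝ) = t - Int.fract t := by
        rw [Int.self_sub_fract, natCast_floor_eq_intCast_floor (by linarith)]
      exact_mod_cast congrArg (Complex.ofReal) this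
    have h6 : (t:ℂ) ^ (-s) = t * (t:ℂ) ^ (-s - 1) := by
      rw [Complex.cpow_sub _ _ ht0, Complex.cpow_one]; field_simp
    simp only [Pi.one_apply, Finset.sum_const, Nat.card_Icc, add_tsub_cancel_right, nsmul_eq_mul,
      mul_one, h5, h6]
    rw [show -(s+1) = -s - 1 by ring]; ring
  rw [h, h4, integral_sub h3 h2, ← h1, integral_Ioi_cpow_of_lt (by simpa using hs) one_pos]
  have : -s + 1 ≠ 0 := by intro h; apply hs1; linear_combination -h
  simp only [ofReal_one, one_cpow]
  field_simp
  ring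

/-- The partial summation formula multiplied by `s - 1`, continued to `Re s > 0`. -/
lemma zeta₁_eq {s : ℂ} (hs : 0 < s.re) :
    riemannZeta₁ s = s - s * (s - 1) * mellin fractTail (-s) := by
  have hopen : IsOpen {s : ℂ | 0 < s.re} := isOpen_lt continuous_const continuous_re
  refine AnalyticOnNhd.eqOn_of_preconnected_of_eventuallyEq (𝕜 := ℂ) (U := {s : ℂ | 0 < s.re})
    (f := riemannZeta₁) (g := fun s => s - s * (s - 1) * mellin fractTail (-s)) (z₀ := 2)
    ?_ ?_ ?_ (by simp) ?_ hs
  · exact (differentiable_riemannZeta₁.differentiableOn).analyticOnNhd hopen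
  · refine DifferentiableOn.analyticOnNhd (fun z hz => ?_) hopen
    have := differentiableAt_mellin_fractTail hz
    have h2 : DifferentiableAt ℂ (fun s => s - s * (s - 1) * mellin fractTail (-s)) z := by fun_prop
    exact h2.differentiableWithinAt
  · exact (convex_halfSpace_re_gt 0).isPreconnected
  · filter_upwards [(isOpen_lt continuous_const continuous_re).mem_nhds
      (show (2:ℂ) ∈ {s : ℂ | 1 < s.re} by simp)] with z hz
    have hz1 : z ≠ 1 := by rintro rfl; simp at hz
    have := zeta_eq_of_one_lt hz
    rw [riemannZeta_eq_inv_sub_mul hz1] at this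
    have hz1' : z - 1 ≠ 0 := sub_ne_zero.2 hz1
    field_simp at this
    rw [this]; ring

/-- Polynomial growth of `(s - 1) ζ(s)`, which is all that Borel-Carathéodory needs. -/
lemma norm_zeta₁_le {s : ℂ} (hs : 1 / 2 < s.re) :
    ‖riemannZeta₁ s‖ ≤ 3 * (1 + ‖s‖) ^ 2 := by
  rw [zeta₁_eq (by linarith)]
  have h := norm_mellin_fractTail_le (s := s) (by linarith)
  have h2 : 1 / s.re ≤ 2 := by rw [div_le_iff₀ (by linarith)]; linarith
  calc _ ≤ ‖s‖ + ‖s‖ * (‖s‖ + 1) * 2 := by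
        refine (norm_sub_le _ _).trans ?_
        rw [norm_mul, norm_mul]
        gcongr
        · simpa using norm_sub_le s 1
        · exact h.trans h2
    _ ≤ _ := by nlinarith [norm_nonneg s]

/-! ### The logarithmic derivative of `(s - 1) ζ(s)` under RH -/

/-- A holomorphic `g` without zeros in the disc of radius `3/2`, with `‖g‖ ≤ M ‖g 0‖` there, has
logarithmic derivative `O(M)` on the disc of radius `7/5`. Writing `g = g(0) e^{F - F(0)}`, the bound
on `‖g‖` bounds `Re (F - F(0))`; Borel-Carathéodory then bounds `F - F(0)` and the Cauchy estimate
bounds `F' = g'/g`. -/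
lemma norm_logDeriv_le_zero {g : ℂ → ℂ} {M : ℝ} (hM : 0 < M)
    (hg : DifferentiableOn ℂ g (Metric.ball 0 (3 / 2)))
    (hg0 : ∀ w ∈ Metric.ball (0 : ℂ) (3 / 2), g w ≠ 0)
    (hgM : ∀ w ∈ Metric.ball (0 : ℂ) (3 / 2), ‖g w‖ ≤ M * ‖g 0‖)
    {z : ℂ} (hz : ‖z‖ ≤ 7 / 5) : ‖deriv g z / g z‖ ≤ 1160 * M := by
  have h0 : (0 : ℂ) ∈ Metric.ball (0 : ℂ) (3 / 2) := by simp
  have hopen : IsOpen (Metric.ball (0 : ℂ) (3 / 2)) := Metric.isOpen_ball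
  obtain ⟨F, hF⟩ := (DifferentiableOn.isExactOn_ball
    ((hg.deriv hopen).div hg hg0))
  have hexp : ∀ w ∈ Metric.ball (0 : ℂ) (3 / 2), exp (-(F w - F 0)) * g w = g 0 := by
    intro w hw
    have hd : ∀ x ∈ Metric.ball (0 : ℂ) (3 / 2),
        HasDerivAt (fun w => exp (-(F w - F 0)) * g w) 0 x := by
      intro x hx
      have h1 := (((hF x hx).sub_const (F 0)).neg).cexp.mul
        ((hg x hx).differentiableAt (hopen.mem_nhds hx)).hasDerivAt
      refine h1.congr_deriv ?_
      have := hg0 x hx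
      simp only [Pi.div_apply]
      field_simp
      ring
    have := hopen.is_const_of_deriv_eq_zero (convex_ball (0:ℂ) (3/2)).isPreconnected
      (fun x hx => (hd x hx).differentiableAt.differentiableWithinAt)
      (fun x hx => (hd x hx).deriv) hw h0
    simpa using this
  have hre : ∀ w ∈ Metric.ball (0 : ℂ) (3 / 2), (F w - F 0).re ≤ M := by
    intro w hw
    have h1 := hexp w hw
    have h2 : ‖g w‖ = Real.exp (F w - F 0).re * ‖g 0‖ := by
      rw [← h1, norm_mul, norm_exp, ← mul_assoc, ← Real.exp_add]; simp
    have h3 := hgM w hw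
    rw [h2] at h3
    have h4 := le_of_mul_le_mul_right h3 (norm_pos_iff.2 (hg0 0 h0))
    linarith [Real.add_one_le_exp (F w - F 0).re]
  have hFd : DifferentiableOn ℂ (fun w => F w - F 0) (Metric.ball 0 (3 / 2)) := fun x hx =>
    ((hF x hx).sub_const (F 0)).differentiableAt.differentiableWithinAt
  have hB : ∀ w : ℂ, ‖w‖ ≤ 29 / 20 → ‖F w - F 0‖ ≤ 58 * M := by
    intro w hw
    have := borelCaratheodory_zero hM hFd hre (by norm_num) (z := w)
      (by rw [mem_ball_zero_iff]; linarith) (by simp)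
    refine this.trans ?_
    rw [div_le_iff₀ (by linarith)]
    nlinarith
  have hsub : Metric.closedBall z (1 / 20) ⊆ Metric.ball 0 (3 / 2) := by
    intro w hw
    rw [mem_closedBall_iff_norm] at hw
    rw [mem_ball_zero_iff]
    linarith [norm_le_norm_add_norm_sub' w z]
  have hC := norm_deriv_le_of_forall_mem_sphere_norm_le (f := fun w => F w - F 0)
    (c := z) (R := 1 / 20) (C := 58 * M) (by norm_num)
    ((hFd.mono hsub).diffContOnCl_ball subset_rfl) (by
      intro w hw
      apply hB
      rw [mem_sphere_iff_norm] at hw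
      linarith [norm_le_norm_add_norm_sub' w z])
  have hz' : z ∈ Metric.ball (0 : ℂ) (3 / 2) := by rw [mem_ball_zero_iff]; linarith
  rw [((hF z hz').sub_const (F 0)).deriv] at hC
  refine hC.trans (le_of_eq ?_)
  ring

lemma norm_logDeriv_le {h : ℂ → ℂ} {c : ℂ} {M : ℝ} (hM : 0 < M)
    (hg : Differentiable ℂ h)
    (hg0 : ∀ w ∈ Metric.ball c (3 / 2), h w ≠ 0)
    (hgM : ∀ w ∈ Metric.ball c (3 / 2), ‖h w‖ ≤ M * ‖h c‖)
    {z : ℂ} (hz : ‖z - c‖ ≤ 7 / 5) : ‖deriv h z / h z‖ ≤ 1160 * M := by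
  have hb : ∀ w ∈ Metric.ball (0:ℂ) (3 / 2), w + c ∈ Metric.ball c (3 / 2) := by
    intro w hw; simpa using hw
  have := norm_logDeriv_le_zero (g := fun w => h (w + c)) hM (by fun_prop)
    (fun w hw => hg0 _ (hb w hw)) (fun w hw => by simpa using hgM _ (hb w hw)) hz
  rw [deriv_comp_add_const] at this
  simpa using this

/-- On `Re s = 2` the series for `1/ζ(s) = ∑ μ(n) n^{-s}` is bounded, so `ζ` is bounded below. -/
lemma exists_le_norm_zeta_two : ∃ c > 0, ∀ s : ℂ, s.re = 2 → c ≤ ‖riemannZeta s‖ := by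
  have hsum : Summable fun n : ℕ => 1 / (n : ℝ) ^ 2 := Real.summable_one_div_nat_pow.2 (by norm_num)
  have hpos : 0 ≤ ∑' n : ℕ, 1 / (n : ℝ) ^ 2 := tsum_nonneg fun n => by positivity
  refine ⟨1 / (1 + ∑' n : ℕ, 1 / (n : ℝ) ^ 2), by positivity, fun s hs => ?_⟩
  have h1 := LSeries_zeta_mul_Lseries_moebius (s := s) (by rw [hs]; norm_num)
  rw [LSeries_zeta_eq_riemannZeta (by rw [hs]; norm_num)] at h1
  have h2 : ‖LSeries (fun n => ((moebius n : ℤ) : ℂ)) s‖ ≤ ∑' n : ℕ, 1 / (n : ℝ) ^ 2 := by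
    refine tsum_of_norm_bounded hsum.hasSum fun n => ?_
    rw [LSeries.norm_term_eq]
    split_ifs with h0
    · positivity
    · rw [hs, Real.rpow_two]
      gcongr
      rw [Complex.norm_intCast]
      exact_mod_cast abs_moebius_le_one
  rw [div_le_iff₀ (by positivity)]
  have h3 := congrArg norm h1
  rw [norm_mul, norm_one] at h3
  nlinarith [norm_nonneg (riemannZeta s)]

/-- Under RH the entire function `(s - 1) ζ(s)` has no zeros in `Re s > 1/2`. -/
lemma zeta₁_ne_zero (RH : ∀ ρ : ℂ, riemannZeta ρ = 0 → 0 < ρ.re → ρ.re < 1 → ρ.re = 1 / 2)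
    {s : ℂ} (hs : 1 / 2 < s.re) : riemannZeta₁ s ≠ 0 := by
  by_cases h1 : s = 1
  · simp [h1]
  intro h
  have h2 : riemannZeta s = 0 := by rw [riemannZeta_eq_inv_sub_mul h1, h, mul_zero]
  by_cases h3 : s.re < 1
  · linarith [RH s h2 (by linarith) h3]
  · exact riemannZeta_ne_zero_of_one_le_re (not_lt.1 h3) h2

/-- Quadratic growth of the logarithmic derivative of `(s - 1) ζ(s)` in `3/5 ≤ Re s ≤ 2`. The disc of
radius `3/2` about `2 + i Im s` is zero-free under RH. -/
lemma exists_norm_logDeriv_zeta₁_le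
    (RH : ∀ ρ : ℂ, riemannZeta ρ = 0 → 0 < ρ.re → ρ.re < 1 → ρ.re = 1 / 2) :
    ∃ C > 0, ∀ s : ℂ, 3 / 5 ≤ s.re → s.re ≤ 2 →
      ‖deriv riemannZeta₁ s / riemannZeta₁ s‖ ≤ C * (1 + s.im ^ 2) := by
  obtain ⟨c₀, hc₀, hc⟩ := exists_le_norm_zeta_two
  refine ⟨1160 * (122 / c₀), by positivity, fun s h1 h2 => ?_⟩
  rw [mul_assoc]
  have hcre : (⟨2, s.im⟩ : ℂ).re = 2 := rfl
  refine norm_logDeriv_le (c := ⟨2, s.im⟩) (by positivity) differentiable_riemannZeta₁ ?_ ?_ ?_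
  · intro w hw
    apply zeta₁_ne_zero RH
    rw [mem_ball_iff_norm] at hw
    have := (abs_le.1 ((abs_re_le_norm _).trans hw.le)).1
    have h3 := (abs_lt.1 ((abs_re_le_norm _).trans_lt hw)).1
    simp at h3
    linarith
  · intro w hw
    rw [mem_ball_iff_norm] at hw
    have h3 := (abs_lt.1 ((abs_re_le_norm _).trans_lt hw)).1
    simp at h3
    have h4 := norm_zeta₁_le (s := w) (by linarith)
    have h5 : c₀ ≤ ‖riemannZeta₁ ⟨2, s.im⟩‖ := by
      have h6 := hc ⟨2, s.im⟩ rfl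
      have hne : (⟨2, s.im⟩ : ℂ) ≠ 1 := fun h => by simpa using congrArg re h
      rw [riemannZeta_eq_inv_sub_mul hne, norm_mul, norm_inv] at h6
      refine h6.trans (mul_le_of_le_one_left (norm_nonneg _) (inv_le_one_of_one_le₀ ?_))
      refine le_trans ?_ (abs_re_le_norm _)
      simp; norm_num
    have h7 : ‖w‖ ≤ 7 / 2 + |s.im| := by
      have := norm_le_norm_add_norm_sub' w ⟨2, s.im⟩
      have h8 := norm_le_abs_re_add_abs_im (⟨2, s.im⟩ : ℂ)
      simp at h8
      linarith
    calc ‖riemannZeta₁ w‖ ≤ 3 * (1 + (7 / 2 + |s.im|)) ^ 2 := h4.trans (by gcongr)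
      _ ≤ 122 * (1 + s.im ^ 2) := by
        rw [← sq_abs s.im]; nlinarith [sq_nonneg (|s.im| - 9 / 2)]
      _ = 122 / c₀ * (1 + s.im ^ 2) * c₀ := by field_simp
      _ ≤ _ := by gcongr
  · have : s - ⟨2, s.im⟩ = ((s.re - 2 : ℝ) : ℂ) := by apply Complex.ext <;> simp
    rw [this, norm_real, Real.norm_eq_abs, abs_le]
    constructor <;> linarith

/-! ### Decay of `Γ` and shifting vertical lines -/

lemma norm_Gamma_le {s : ℂ} (hs : 0 < s.re) : ‖Gamma s‖ ≤ Real.Gamma s.re := by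
  rw [Gamma_eq_integral hs, Real.Gamma_eq_integral hs, GammaIntegral]
  refine (norm_integral_le_integral_norm _).trans (le_of_eq ?_)
  refine setIntegral_congr_fun measurableSet_Ioi fun t (ht : 0 < t) => ?_
  simp only [norm_mul, norm_real, Real.norm_eq_abs, Real.abs_exp]
  rw [norm_cpow_eq_rpow_re_of_pos ht]; simp

/-- Iterating `Γ(s + 1) = s Γ(s)` yields as much polynomial decay as wanted. -/
lemma norm_Gamma_le_decay {s : ℂ} (h1 : 3 / 5 ≤ s.re) (h2 : s.re ≤ 2) :
    ‖Gamma s‖ ≤ 1000 / (1 + s.im ^ 2) ^ 2 := by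
  have hn : ∀ j : ℝ, 0 ≤ j → 9 / 25 * (1 + s.im ^ 2) ≤ ‖s + j‖ ^ 2 := by
    intro j hj
    rw [← normSq_eq_norm_sq, normSq_apply]
    simp
    nlinarith [sq_nonneg s.im]
  have hne : ∀ j : ℝ, 0 ≤ j → s + j ≠ 0 := by
    intro j hj h
    have := congrArg re h
    simp at this; linarith
  have hG : Gamma (s + 4) = (s + 3) * ((s + 2) * ((s + 1) * (s * Gamma s))) := by
    rw [← Gamma_add_one s (by simpa using hne 0 le_rfl),
      ← Gamma_add_one (s + 1) (by simpa using hne 1 (by norm_num)),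
      show s + 1 + 1 = s + 2 by ring,
      ← Gamma_add_one (s + 2) (by simpa using hne 2 (by norm_num)),
      show s + 2 + 1 = s + 3 by ring,
      ← Gamma_add_one (s + 3) (by simpa using hne 3 (by norm_num)),
      show s + 3 + 1 = s + 4 by ring]
  have hle : ‖Gamma (s + 4)‖ ≤ 120 := by
    refine (norm_Gamma_le (by simp; linarith)).trans ?_
    have h6 : Real.Gamma 6 = 120 := by
      rw [show (6 : ℝ) = (5 : ℕ) + 1 by norm_num, Real.Gamma_nat_eq_factorial]
      norm_num [Nat.factorial]
    rw [← h6]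
    refine Real.Gamma_strictMonoOn_Ici.monotoneOn ?_ ?_ ?_
    · simp; linarith
    · simp; norm_num
    · simp; linarith
  rw [hG] at hle
  simp only [norm_mul] at hle
  have e0 := hn 0 le_rfl
  have e1 := hn 1 (by norm_num)
  have e2 := hn 2 (by norm_num)
  have e3 := hn 3 (by norm_num)
  simp only [ofReal_zero, add_zero, ofReal_one, ofReal_ofNat] at e0 e1 e2 e3
  set q := 9 / 25 * (1 + s.im ^ 2) with hq
  have hq0 : 0 ≤ q := by positivity
  have f1 : q ≤ ‖s‖ * ‖s + 1‖ := by
    refine abs_le_of_sq_le_sq' ?_ (by positivity) |>.2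
    calc q ^ 2 = q * q := sq q
      _ ≤ ‖s‖ ^ 2 * ‖s + 1‖ ^ 2 := by gcongr
      _ = _ := by ring
  have f2 : q ≤ ‖s + 2‖ * ‖s + 3‖ := by
    refine abs_le_of_sq_le_sq' ?_ (by positivity) |>.2
    calc q ^ 2 = q * q := sq q
      _ ≤ ‖s + 2‖ ^ 2 * ‖s + 3‖ ^ 2 := by gcongr
      _ = _ := by ring
  have f3 : q * q * ‖Gamma s‖ ≤ 120 := by
    refine le_trans ?_ hle
    calc q * q * ‖Gamma s‖ ≤ (‖s‖ * ‖s + 1‖) * (‖s + 2‖ * ‖s + 3‖) * ‖Gamma s‖ := by gcongr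
      _ = _ := by ring
  rw [le_div_iff₀ (by positivity)]
  have : q * q = 81 / 625 * (1 + s.im ^ 2) ^ 2 := by rw [hq]; ring
  rw [this] at f3
  linarith

lemma integrable_vertical {f : ℂ → ℂ} {a b C σ : ℝ} (h1 : a ≤ σ) (h2 : σ ≤ b)
    (hf : ∀ s : ℂ, a ≤ s.re → s.re ≤ b → DifferentiableAt ℂ f s)
    (hC : ∀ s : ℂ, a ≤ s.re → s.re ≤ b → ‖f s‖ ≤ C / (1 + s.im ^ 2)) :
    Integrable fun y : ℝ => f (σ + y * I) := by
  refine (integrable_inv_one_add_sq.const_mul C).mono' ?_ (ae_of_all _ fun y => ?_)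
  · refine Continuous.aestronglyMeasurable (continuous_iff_continuousAt.2 fun y => ?_)
    refine ContinuousAt.comp (f := fun y : ℝ => (σ + y * I : ℂ)) (g := f)
      (hf _ (by simpa) (by simpa)).continuousAt (by fun_prop)
  · have := hC (σ + y * I) (by simpa) (by simpa)
    simpa [div_eq_mul_inv] using this

/-- Shifting a vertical line of integration across a strip in which the integrand is holomorphic
and decays quadratically. -/
lemma integral_vertical_eq {f : ℂ → ℂ} {a b C : ℝ} (hab : a ≤ b)
    (hf : ∀ s : ℂ, a ≤ s.re → s.re ≤ b → DifferentiableAt ℂ f s)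
    (hC : ∀ s : ℂ, a ≤ s.re → s.re ≤ b → ‖f s‖ ≤ C / (1 + s.im ^ 2)) :
    ∫ y : ℝ, f (a + y * I) = ∫ y : ℝ, f (b + y * I) := by
  have hvert : ∀ σ : ℝ, a ≤ σ → σ ≤ b → Integrable fun y : ℝ => f (σ + y * I) :=
    fun σ h1 h2 => integrable_vertical h1 h2 hf hC
  have hrect : ∀ T : ℝ, 0 < T →
      ‖(∫ y in -T..T, f (b + y * I)) - ∫ y in -T..T, f (a + y * I)‖
        ≤ 2 * (C / (1 + T ^ 2) * (b - a)) := by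
    intro T hT
    have h := integral_boundary_rect_eq_zero_of_differentiableOn f (⟨a, -T⟩ : ℂ) ⟨b, T⟩ (by
      intro s hs
      rw [mem_reProdIm] at hs
      have h1 := hs.1
      rw [uIcc_of_le hab] at h1
      exact (hf s h1.1 h1.2).differentiableWithinAt)
    have hb : ∀ v : ℝ, v ^ 2 = T ^ 2 →
        ‖∫ x in a..b, f (x + v * I)‖ ≤ C / (1 + T ^ 2) * (b - a) := by
      intro v hv
      refine (intervalIntegral.norm_integral_le_of_norm_le_const (C := C / (1 + T ^ 2)) ?_).trans
        (le_of_eq (by rw [abs_of_nonneg (by linarith)]))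
      intro x hx
      rw [uIoc_of_le hab] at hx
      have := hC (x + v * I) (by simpa using hx.1.le) (by simpa using hx.2)
      simpa [hv] using this
    have h1 := hb T rfl
    have h2 := hb (-T) (by ring)
    simp only [smul_eq_mul] at h
    have h3 : I * ((∫ y in -T..T, f (b + y * I)) - ∫ y in -T..T, f (a + y * I))
        = (∫ x in a..b, f (x + T * I)) - ∫ x in a..b, f (x + (-T : ℝ) * I) := by
      linear_combination h
    calc _ = ‖I * ((∫ y in -T..T, f (b + y * I)) - ∫ y in -T..T, f (a + y * I))‖ := by simp
      _ ≤ _ := by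
        rw [h3]
        refine (norm_sub_le _ _).trans ?_
        linarith
  have hT : Tendsto (fun T : ℝ => (∫ y in -T..T, f (b + y * I)) - ∫ y in -T..T, f (a + y * I))
      atTop (𝓝 ((∫ y : ℝ, f (b + y * I)) - ∫ y : ℝ, f (a + y * I))) :=
    (intervalIntegral_tendsto_integral (hvert b hab le_rfl) tendsto_neg_atTop_atBot tendsto_id).sub
    (intervalIntegral_tendsto_integral (hvert a le_rfl hab) tendsto_neg_atTop_atBot tendsto_id)
  have hT0 : Tendsto (fun T : ℝ => (∫ y in -T..T, f (b + y * I)) - ∫ y in -T..T, f (a + y * I))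
      atTop (𝓝 0) := by
    refine squeeze_zero_norm' ((eventually_gt_atTop 0).mono hrect) ?_
    have h1 : Tendsto (fun T : ℝ => 1 + T ^ 2) atTop atTop :=
      tendsto_atTop_add_const_left _ _ (tendsto_pow_atTop two_ne_zero)
    have := ((tendsto_const_nhds (x := C)).div_atTop h1).mul_const (b - a) |>.const_mul 2
    simpa using this
  exact (sub_eq_zero.1 (tendsto_nhds_unique hT hT0)).symm

/-! ### The series `S(t)` and its Mellin transforms -/

/-- The exponential generating series `S(t) = ∑_{n ≥ 1} Λ(n) e^{-nt}` for real `t`. -/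
noncomputable def lambdaSeries (t : ℝ) : ℝ :=
  ∑' n : ℕ, Λ (n + 1) * Real.exp (-((n + 1 : ℕ) : ℝ) * t)

lemma summable_vonMangoldt_div {σ : ℝ} (hσ : 1 < σ) :
    Summable fun n : ℕ => Λ (n + 1) / ((n + 1 : ℕ) : ℝ) ^ σ := by
  have h := (LSeriesSummable_vonMangoldt (s := σ) (by simpa using hσ)).norm
  have h2 := (summable_nat_add_iff 1).2 h
  refine h2.congr fun n => ?_
  rw [LSeries.norm_term_eq, if_neg (Nat.succ_ne_zero n)]
  simp [abs_of_nonneg vonMangoldt_nonneg]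

/-- The exponent `3/2` is any number above `1`, where `∑ Λ(n) n^{-σ}` converges. -/
lemma exp_neg_le_rpow {x : ℝ} (hx : 0 < x) : Real.exp (-x) ≤ 2 / x ^ (3 / 2 : ℝ) := by
  have h1 : x ^ (3 / 2 : ℝ) ≤ 1 + x ^ 2 := by
    rcases le_total x 1 with h | h
    · have := Real.rpow_le_one hx.le h (show (0:ℝ) ≤ 3 / 2 by norm_num)
      nlinarith
    · have := Real.rpow_le_rpow_of_exponent_le h (show (3 / 2 : ℝ) ≤ 2 by norm_num)
      rw [Real.rpow_two] at this
      linarith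
  have h2 := Real.quadratic_le_exp_of_nonneg hx.le
  have h3 : 0 < x ^ (3 / 2 : ℝ) := by positivity
  rw [le_div_iff₀ h3, Real.exp_neg, inv_mul_le_iff₀ (Real.exp_pos x)]
  linarith

lemma term_le {t : ℝ} (ht : 0 < t) (n : ℕ) :
    Λ (n + 1) * Real.exp (-((n + 1 : ℕ) : ℝ) * t)
      ≤ 2 * t ^ (-(3 / 2 : ℝ)) * (Λ (n + 1) / ((n + 1 : ℕ) : ℝ) ^ (3 / 2 : ℝ)) := by
  have h := exp_neg_le_rpow (x := ((n + 1 : ℕ) : ℝ) * t) (by positivity)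
  calc _ = Λ (n + 1) * Real.exp (-(((n + 1 : ℕ) : ℝ) * t)) := by rw [neg_mul]
    _ ≤ Λ (n + 1) * (2 / (((n + 1 : ℕ) : ℝ) * t) ^ (3 / 2 : ℝ)) := by
      gcongr
    _ = _ := by
      rw [Real.mul_rpow (by positivity) ht.le, Real.rpow_neg ht.le]
      field_simp

lemma term_nonneg (t : ℝ) (n : ℕ) : 0 ≤ Λ (n + 1) * Real.exp (-((n + 1 : ℕ) : ℝ) * t) :=
  mul_nonneg vonMangoldt_nonneg (Real.exp_pos _).le

lemma summable_lambdaSeries {t : ℝ} (ht : 0 < t) :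
    Summable fun n : ℕ => Λ (n + 1) * Real.exp (-((n + 1 : ℕ) : ℝ) * t) :=
  .of_nonneg_of_le (term_nonneg t) (term_le ht)
    ((summable_vonMangoldt_div (by norm_num)).mul_left _)

lemma lambdaSeries_nonneg (t : ℝ) : 0 ≤ lambdaSeries t := tsum_nonneg (term_nonneg t)

lemma isBigO_lambdaSeries_zero :
    lambdaSeries =O[𝓝[>] 0] fun t => t ^ (-(3 / 2 : ℝ)) := by
  refine IsBigO.of_bound (2 * ∑' n : ℕ, Λ (n + 1) / ((n + 1 : ℕ) : ℝ) ^ (3 / 2 : ℝ)) ?_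
  filter_upwards [self_mem_nhdsWithin] with t (ht : 0 < t)
  rw [Real.norm_of_nonneg (lambdaSeries_nonneg t), Real.norm_of_nonneg (by positivity)]
  refine ((summable_lambdaSeries ht).tsum_le_tsum (term_le ht)
    ((summable_vonMangoldt_div (by norm_num)).mul_left _)).trans (le_of_eq ?_)
  rw [tsum_mul_left]; ring

lemma isBigO_lambdaSeries_top :
    lambdaSeries =O[atTop] fun t => Real.exp (-(1 / 2) * t) := by
  refine IsBigO.of_bound (lambdaSeries (1 / 2)) ?_
  filter_upwards [eventually_ge_atTop 1] with t ht
  rw [Real.norm_of_nonneg (lambdaSeries_nonneg t), Real.norm_of_nonneg (Real.exp_pos _).le,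
    lambdaSeries, lambdaSeries, ← tsum_mul_right]
  refine (summable_lambdaSeries (by linarith)).tsum_le_tsum (fun n => ?_)
    ((summable_lambdaSeries (by norm_num)).mul_right _)
  rw [mul_assoc, ← Real.exp_add]
  have hn : (1 : ℝ) ≤ ((n + 1 : ℕ) : ℝ) := by push_cast; linarith [n.cast_nonneg (α := ℝ)]
  gcongr
  nlinarith

lemma continuousOn_lambdaSeries : ContinuousOn lambdaSeries (Ioi 0) := by
  intro t (ht : 0 < t)
  have h : ContinuousOn lambdaSeries (Ioi (t / 2)) := by
    refine continuousOn_tsum (fun n => by fun_prop)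
      (summable_lambdaSeries (t := t / 2) (by linarith)) fun n x (hx : t / 2 < x) => ?_
    rw [Real.norm_of_nonneg (term_nonneg x n)]
    have : (0 : ℝ) ≤ Λ (n + 1) := vonMangoldt_nonneg
    gcongr ?_ * Real.exp ?_
    have : (0 : ℝ) ≤ ((n + 1 : ℕ) : ℝ) := by positivity
    nlinarith
  exact (h.continuousAt (Ioi_mem_nhds (by linarith))).continuousWithinAt

/-- The `r`-th power of a series of nonnegative terms, expanded over `r`-tuples. -/
lemma hasSum_pi_pow {f : ℕ → ℝ} (hf0 : ∀ n, 0 ≤ f n) {a : ℝ} (hf : HasSum f a) (r : ℕ) :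
    HasSum (fun k : Fin r → ℕ => ∏ i, f (k i)) (a ^ r) := by
  induction r with
  | zero => simp
  | succ r ih =>
    rw [← (Fin.consEquiv fun _ => ℕ).hasSum_iff, pow_succ']
    have hg : Summable (fun k : Fin r → ℕ => ∏ i, f (k i)) := ih.summable
    have hg0 : 0 ≤ (fun k : Fin r → ℕ => ∏ i, f (k i)) :=
      fun k => Finset.prod_nonneg fun i _ => hf0 _
    have h := Summable.mul_of_nonneg (f := f) hf.summable hg hf0 hg0
    convert! hf.mul ih h using 2 with x
    simp [Fin.prod_univ_succ]

/-- Since `(k₁ + ⋯ + k_r)^σ ≥ ∏ k_i^{σ/r}`, the series for `F_r` is dominated by the `r`-th power of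
`∑ Λ(n) n^{-σ/r}`. -/
lemma summable_goldbach {r : ℕ} (hr : 1 ≤ r) {σ : ℝ} (hσ : (r : ℝ) < σ) :
    Summable fun k : Fin r → ℕ =>
      ‖∏ i : Fin r, (Λ (k i + 1) : ℂ)‖ / ((∑ i : Fin r, (k i + 1) : ℕ) : ℝ) ^ σ := by
  have hr0 : (0 : ℝ) < r := by exact_mod_cast hr
  have h1 : 1 < σ / r := by rwa [one_lt_div hr0]
  have h := hasSum_pi_pow (fun n => by have := vonMangoldt_nonneg (n := n + 1); positivity)
    (summable_vonMangoldt_div h1).hasSum r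
  refine .of_nonneg_of_le (fun k => by positivity) (fun k => ?_) h.summable
  rw [Finset.prod_div_distrib, norm_prod]
  have hpos : ∀ i, (0 : ℝ) < ((k i + 1 : ℕ) : ℝ) := fun i => by positivity
  have h2 : ∏ i, ((k i + 1 : ℕ) : ℝ) ^ (σ / r)
      ≤ ((∑ i : Fin r, (k i + 1) : ℕ) : ℝ) ^ σ := by
    calc _ ≤ ∏ i : Fin r, ((∑ i : Fin r, (k i + 1) : ℕ) : ℝ) ^ (σ / r) := by
          refine Finset.prod_le_prod (fun i _ => by positivity) fun i _ => ?_
          refine Real.rpow_le_rpow (hpos i).le ?_ (by linarith)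
          exact_mod_cast Finset.single_le_sum (f := fun i => k i + 1) (fun _ _ => Nat.zero_le _)
            (Finset.mem_univ i)
      _ = _ := by
        rw [Finset.prod_const, Finset.card_univ, Fintype.card_fin, ← Real.rpow_natCast,
          ← Real.rpow_mul (by positivity), div_mul_cancel₀ _ hr0.ne']
  have h3 : ∏ i, ‖(Λ (k i + 1) : ℂ)‖ = ∏ i, Λ (k i + 1) :=
    Finset.prod_congr rfl fun i _ => by
      rw [norm_real, Real.norm_of_nonneg vonMangoldt_nonneg]
  rw [h3]
  have h4 : (0 : ℝ) ≤ ∏ i, Λ (k i + 1) := Finset.prod_nonneg fun i _ => vonMangoldt_nonneg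
  have h5 : (0 : ℝ) < ∏ i, ((k i + 1 : ℕ) : ℝ) ^ (σ / r) :=
    Finset.prod_pos fun i _ => Real.rpow_pos_of_pos (hpos i) _
  gcongr

/-- The Mellin transform of `S(t)^r` is `Γ(s) F_r(s)`, by expanding `S(t)^r` over `r`-tuples. -/
lemma mellin_lambdaSeries_pow {r : ℕ} (hr : 1 ≤ r) {s : ℂ} (hs : (r : ℝ) < s.re) :
    mellin (fun t => (lambdaSeries t : ℂ) ^ r) s = Gamma s * goldbachF r s := by
  have hr0 : (0 : ℝ) < r := by exact_mod_cast hr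
  have : Nonempty (Fin r) := ⟨⟨0, hr⟩⟩
  have h := hasSum_mellin (ι := Fin r → ℕ) (a := fun k => ∏ i : Fin r, (Λ (k i + 1) : ℂ))
    (p := fun k => ((∑ i : Fin r, (k i + 1) : ℕ) : ℝ))
    (F := fun t => (lambdaSeries t : ℂ) ^ r) (s := s)
    (fun k => Or.inr (by
      exact_mod_cast Finset.sum_pos (fun i _ => Nat.succ_pos _) Finset.univ_nonempty))
    (by linarith) (fun t (ht : 0 < t) => ?_) (summable_goldbach hr hs)
  · rw [← h.tsum_eq, goldbachF, ← tsum_mul_left]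
    refine tsum_congr fun k => ?_
    rw [mul_div_assoc, ofReal_natCast]
  · have h1 := hasSum_pi_pow (term_nonneg t) (summable_lambdaSeries ht).hasSum r
    have h2 := Complex.hasSum_ofReal.2 h1
    convert! h2 using 1
    · ext k
      rw [Finset.prod_mul_distrib, ← Real.exp_sum, ofReal_mul, ofReal_prod]
      congr 3
      rw [← Finset.sum_mul, Finset.sum_neg_distrib]
      push_cast
      rfl
    · rw [ofReal_pow, lambdaSeries]

lemma goldbachF_one {s : ℂ} (hs : 1 < s.re) :
    goldbachF 1 s = -deriv riemannZeta s / riemannZeta s := by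
  rw [← LSeries_vonMangoldt_eq_deriv_riemannZeta_div hs, LSeries, goldbachF,
    ← (Equiv.funUnique (Fin 1) ℕ).symm.tsum_eq]
  rw [(LSeriesSummable_vonMangoldt hs).tsum_eq_zero_add]
  simp [LSeries.term]

/-- Here `F₁ = -ζ'/ζ` is written through the entire function `(s - 1) ζ(s)`, which isolates its pole. -/
lemma goldbachF_one_eq {s : ℂ} (hs : 1 < s.re) (hz : riemannZeta₁ s ≠ 0) :
    goldbachF 1 s = 1 / (s - 1) - deriv riemannZeta₁ s / riemannZeta₁ s := by
  have hs1 : s ≠ 1 := by rintro rfl; norm_num at hs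
  have hs0 : s - 1 ≠ 0 := sub_ne_zero.2 hs1
  rw [goldbachF_one hs, deriv_riemannZeta_eq_neg_inv_sub_sq_mul_add hs1,
    riemannZeta_eq_inv_sub_mul hs1]
  field_simp
  ring

/-! ### The bound `t S(t) - 1 = O(t^{2/5})` under RH -/

lemma locallyIntegrableOn_lambdaSeries_pow (r : ℕ) :
    LocallyIntegrableOn (fun t => (lambdaSeries t : ℂ) ^ r) (Ioi 0) :=
  ContinuousOn.locallyIntegrableOn
    ((continuous_ofReal.comp_continuousOn continuousOn_lambdaSeries).pow r) measurableSet_Ioi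

lemma mellinConvergent_lambdaSeries {s : ℂ} (hs : 3 / 2 < s.re) :
    MellinConvergent (fun t => (lambdaSeries t : ℂ)) s :=
  mellinConvergent_of_isBigO_rpow_exp (a := 1 / 2) (b := 3 / 2) (by norm_num)
    (by simpa using locallyIntegrableOn_lambdaSeries_pow 1)
    (isBigO_ofReal_left.2 isBigO_lambdaSeries_top)
    (isBigO_ofReal_left.2 isBigO_lambdaSeries_zero) hs

/-- `D(t) = S(t) - e^{-t}/t`. Subtracting `e^{-t}/t` rather than `1/t` removes the pole of the
Mellin transform of `S` at `s = 1` and keeps exponential decay at infinity. -/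
noncomputable def lambdaError (t : ℝ) : ℂ :=
  (lambdaSeries t : ℂ) - (t : ℂ) ^ (-1 : ℂ) • ((Real.exp (-t) : ℝ) : ℂ)

/-- The pole of `-Γ(s) ζ'(s)/ζ(s)` at `s = 1` is cancelled by `Γ(s - 1)`, the transform of `e^{-t}/t`. -/
lemma hasMellin_lambdaError
    (RH : ∀ ρ : ℂ, riemannZeta ρ = 0 → 0 < ρ.re → ρ.re < 1 → ρ.re = 1 / 2)
    {s : ℂ} (hs : 3 / 2 < s.re) :
    HasMellin lambdaError s (-(Gamma s * (deriv riemannZeta₁ s / riemannZeta₁ s))) := by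
  have hs0 : s - 1 ≠ 0 := sub_ne_zero.2 (by rintro rfl; norm_num at hs)
  have hz := zeta₁_ne_zero RH (s := s) (by linarith)
  have hconv : MellinConvergent (fun t : ℝ => (t : ℂ) ^ (-1 : ℂ) • ((Real.exp (-t) : ℝ) : ℂ)) s := by
    rw [MellinConvergent.cpow_smul]
    have := GammaIntegral_convergent (s := s + -1) (by simp; linarith)
    refine this.congr_fun (fun t _ => ?_) measurableSet_Ioi
    simp only [smul_eq_mul]; ring
  have h := hasMellin_sub (mellinConvergent_lambdaSeries hs) hconv
  have e1 : mellin (fun t => (lambdaSeries t : ℂ)) s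
      = Gamma s * (1 / (s - 1) - deriv riemannZeta₁ s / riemannZeta₁ s) := by
    rw [← goldbachF_one_eq (by linarith) hz, ← mellin_lambdaSeries_pow le_rfl (by simp; linarith)]
    simp
  have e2 : mellin (fun t : ℝ => (t : ℂ) ^ (-1 : ℂ) • ((Real.exp (-t) : ℝ) : ℂ)) s
      = Gamma (s - 1) := by
    rw [mellin_cpow_smul, Gamma_eq_integral (by simp; linarith), GammaIntegral_eq_mellin,
      sub_eq_add_neg]
  have e3 : Gamma s = (s - 1) * Gamma (s - 1) := by
    rw [← Gamma_add_one _ hs0, sub_add_cancel]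
  refine ⟨h.1, h.2.trans ?_⟩
  rw [e1, e2, e3]
  field_simp
  ring

/-- Under RH the error `D(t)` is `O(t^{-3/5})`: Mellin inversion on `Re s = 2`, followed by a shift
of the line of integration to `Re s = 3/5`. -/
lemma exists_norm_lambdaError_le
    (RH : ∀ ρ : ℂ, riemannZeta ρ = 0 → 0 < ρ.re → ρ.re < 1 → ρ.re = 1 / 2) :
    ∃ K : ℝ, ∀ t : ℝ, 0 < t → ‖lambdaError t‖ ≤ K * t ^ (-(3 / 5 : ℝ)) := by
  obtain ⟨C, hC0, hC⟩ := exists_norm_logDeriv_zeta₁_le RH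
  set G : ℂ → ℂ := fun s => -(Gamma s * (deriv riemannZeta₁ s / riemannZeta₁ s)) with hG
  have hGd : ∀ s : ℂ, 3 / 5 ≤ s.re → DifferentiableAt ℂ G s := by
    intro s h1
    refine DifferentiableAt.neg (DifferentiableAt.mul
      (differentiableAt_Gamma s fun m hm => ?_) (DifferentiableAt.div ?_ ?_
        (zeta₁_ne_zero RH (by linarith))))
    · rw [hm] at h1
      simp at h1
      linarith [m.cast_nonneg (α := ℝ)]
    · exact (differentiable_riemannZeta₁.analyticAt s).deriv.differentiableAt
    · exact differentiable_riemannZeta₁ s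
  have hGb : ∀ s : ℂ, 3 / 5 ≤ s.re → s.re ≤ 2 → ‖G s‖ ≤ 1000 * C / (1 + s.im ^ 2) := by
    intro s h1 h2
    rw [hG, norm_neg, norm_mul]
    calc _ ≤ 1000 / (1 + s.im ^ 2) ^ 2 * (C * (1 + s.im ^ 2)) := by
          gcongr
          · exact norm_Gamma_le_decay h1 h2
          · exact hC s h1 h2
      _ = _ := by field_simp
  have hline : ∀ y : ℝ, mellin lambdaError ((2 : ℝ) + y * I) = G ((2 : ℝ) + y * I) := fun y =>
    (hasMellin_lambdaError RH (by simp; norm_num)).2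
  have hvert : VerticalIntegrable (mellin lambdaError) 2 := by
    rw [VerticalIntegrable, funext hline]
    exact integrable_vertical (a := 3 / 5) (b := 2) (by norm_num) le_rfl
      (fun s h1 _ => hGd s h1) hGb
  refine ⟨1000 * C, fun t ht => ?_⟩
  have hcont : ContinuousAt lambdaError t := by
    have h1 := continuousOn_lambdaSeries.continuousAt (Ioi_mem_nhds ht)
    have h2 : ContinuousAt (fun t : ℝ => (t : ℂ) ^ (-1 : ℂ)) t :=
      continuousAt_ofReal_cpow_const _ _ (Or.inr ht.ne')
    unfold lambdaError
    fun_prop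
  have hinv := mellinInv_mellin_eq 2 lambdaError ht
    (hasMellin_lambdaError RH (by simp; norm_num)).1 hvert hcont
  have hnorm : ∀ s : ℂ, ‖(t : ℂ) ^ (-s)‖ = t ^ (-s.re) := fun s => by
    rw [norm_cpow_eq_rpow_re_of_pos ht, neg_re]
  have hshift := integral_vertical_eq (f := fun s => (t : ℂ) ^ (-s) * G s) (a := 3 / 5) (b := 2)
    (C := (t ^ (-(3 / 5) : ℝ) + t ^ (-2 : ℝ)) * (1000 * C)) (by norm_num)
    (fun s h1 _ => (DifferentiableAt.const_cpow (by fun_prop)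
      (Or.inl (ofReal_ne_zero.2 ht.ne'))).mul (hGd s h1))
    (fun s h1 h2 => by
      -- On the strip `t^{-Re s}` is at most its larger end value, hence at most their sum.
      rw [norm_mul, hnorm, mul_div_assoc]
      refine mul_le_mul ?_ (hGb s h1 h2) (norm_nonneg _) (by positivity)
      have p1 : 0 < t ^ (-(3 / 5) : ℝ) := by positivity
      have p2 : 0 < t ^ (-2 : ℝ) := by positivity
      rcases le_total t 1 with h | h
      · have := Real.rpow_le_rpow_of_exponent_ge ht h (show -2 ≤ -s.re by linarith)
        linarith
      · have := Real.rpow_le_rpow_of_exponent_le h (show -s.re ≤ -(3 / 5) by linarith)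
        linarith)
  rw [← hinv, mellinInv]
  simp only [hline, smul_eq_mul]
  rw [← hshift, norm_smul]
  have hb : ‖∫ y : ℝ, (t : ℂ) ^ (-(((3 / 5 : ℝ) : ℂ) + y * I)) * G ((3 / 5 : ℝ) + y * I)‖
      ≤ ∫ y : ℝ, (t ^ (-(3 / 5) : ℝ) * (1000 * C)) * (1 + y ^ 2)⁻¹ := by
    refine norm_integral_le_of_norm_le (integrable_inv_one_add_sq.const_mul _)
      (ae_of_all _ fun y => ?_)
    have := hGb ((3 / 5 : ℝ) + y * I) (by simp) (by simp; norm_num)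
    have e : -(((3 / 5 : ℝ) : ℂ) + y * I).re = -(3 / 5) := by simp
    rw [norm_mul, hnorm, mul_assoc, e]
    refine mul_le_mul_of_nonneg_left ?_ (by positivity)
    simpa [div_eq_mul_inv] using this
  rw [integral_const_mul, integral_univ_inv_one_add_sq] at hb
  rw [Real.norm_of_nonneg (by positivity)]
  calc _ ≤ 1 / (2 * Real.pi) * (t ^ (-(3 / 5) : ℝ) * (1000 * C) * Real.pi) := by gcongr
    _ = 1 / 2 * (1000 * C * t ^ (-(3 / 5) : ℝ)) := by
      field_simp
    _ ≤ _ := by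
      have : 0 < 1000 * C * t ^ (-(3 / 5) : ℝ) := by positivity
      linarith

/-- The relative error `u(t) = t S(t) - 1`. -/
noncomputable def relError (t : ℝ) : ℂ := t * lambdaSeries t - 1

/-- Under RH, `t S(t) = 1 + O(t^{2/5})` as `t → 0⁺`. -/
lemma isBigO_relError
    (RH : ∀ ρ : ℂ, riemannZeta ρ = 0 → 0 < ρ.re → ρ.re < 1 → ρ.re = 1 / 2) :
    relError =O[𝓝[>] 0] fun t => t ^ (2 / 5 : ℝ) := by
  obtain ⟨K, hK⟩ := exists_norm_lambdaError_le RH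
  refine IsBigO.of_bound (K + 1) ?_
  filter_upwards [Ioo_mem_nhdsGT (zero_lt_one' ℝ)] with t ht
  have ht0 : (0 : ℝ) < t := ht.1
  have htc : (t : ℂ) ≠ 0 := ofReal_ne_zero.2 ht0.ne'
  have h1 : relError t = t * lambdaError t + ((Real.exp (-t) - 1 : ℝ) : ℂ) := by
    rw [relError, lambdaError, smul_eq_mul, cpow_neg_one]
    push_cast
    field_simp
    ring
  have h2 : |Real.exp (-t) - 1| ≤ t := by
    have := Real.add_one_le_exp (-t)
    have : Real.exp (-t) ≤ 1 := Real.exp_le_one_iff.2 (by linarith)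
    rw [abs_le]
    constructor <;> linarith
  have h3 : t ≤ t ^ (2 / 5 : ℝ) := by
    simpa using Real.rpow_le_rpow_of_exponent_ge ht0 ht.2.le (show (2 / 5 : ℝ) ≤ 1 by norm_num)
  have h4 : t * t ^ (-(3 / 5) : ℝ) = t ^ (2 / 5 : ℝ) := by
    conv_lhs => rw [← Real.rpow_one_add' ht0.le (by norm_num)]
    norm_num
  rw [h1, Real.norm_of_nonneg (by positivity)]
  calc _ ≤ ‖(t : ℂ) * lambdaError t‖ + ‖((Real.exp (-t) - 1 : ℝ) : ℂ)‖ := norm_add_le _ _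
    _ ≤ t * (K * t ^ (-(3 / 5) : ℝ)) + t := by
      rw [norm_mul, norm_real, norm_real, Real.norm_of_nonneg ht0.le, Real.norm_eq_abs]
      gcongr
      exact hK t ht0
    _ = K * t ^ (2 / 5 : ℝ) + t := by rw [← h4]; ring
    _ ≤ _ := by linarith

/-! ### The second-order remainder -/

lemma isBigO_lambdaSeries_inv
    (RH : ∀ ρ : ℂ, riemannZeta ρ = 0 → 0 < ρ.re → ρ.re < 1 → ρ.re = 1 / 2) (k : ℕ) :
    (fun t => (lambdaSeries t : ℂ) ^ k) =O[𝓝[>] 0] fun t : ℝ => t ^ (-(k : ℝ)) := by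
  have h1 : (fun t : ℝ => (t : ℂ) * lambdaSeries t) =O[𝓝[>] 0] fun _ => (1 : ℝ) := by
    have h2 : (fun t : ℝ => t ^ (2 / 5 : ℝ)) =O[𝓝[>] 0] fun _ => (1 : ℝ) := by
      have : Tendsto (fun t : ℝ => t ^ (2 / 5 : ℝ)) (𝓝 0) (𝓝 (0 ^ (2 / 5 : ℝ))) :=
        (Real.continuousAt_rpow_const _ _ (Or.inr (by norm_num))).tendsto
      exact (this.mono_left nhdsWithin_le_nhds).isBigO_one ℝ
    have h3 := ((isBigO_relError RH).trans h2).add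
      (isBigO_const_const (1 : ℂ) (one_ne_zero (α := ℝ)) (𝓝[>] 0))
    exact h3.congr_left fun t => sub_add_cancel _ _
  have h2 := (isBigO_refl (fun t : ℝ => t ^ (-(k : ℝ))) (𝓝[>] 0)).smul (h1.pow k)
  refine h2.congr' ?_ (Eventually.of_forall fun t => by simp)
  filter_upwards [self_mem_nhdsWithin] with t (ht : 0 < t)
  have htc : (t : ℂ) ≠ 0 := ofReal_ne_zero.2 ht.ne'
  rw [Real.rpow_neg ht.le, Real.rpow_natCast, real_smul, mul_pow]
  push_cast
  field_simp

/-- `(1 + u)^r` minus its Taylor polynomial of degree two at `u = 0`. -/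
noncomputable def binomRem (r : ℕ) (u : ℂ) : ℂ :=
  (1 + u) ^ r - 1 - r * u - r * (r - 1) / 2 * u ^ 2

/-- By induction on `r`, from `P_{r+1}(u) = (1 + u) P_r(u) + (r(r-1)/2) u³`. -/
lemma isBigO_binomRem (r : ℕ) : binomRem r =O[𝓝 0] fun u => u ^ 3 := by
  induction r with
  | zero =>
    have : binomRem 0 = fun _ => 0 := by ext u; simp [binomRem]
    rw [this]
    exact isBigO_zero _ _
  | succ r ih =>
    have : binomRem (r + 1) = fun u => (1 + u) * binomRem r u + (r * (r - 1) / 2 : ℂ) * u ^ 3 := by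
      ext u
      simp only [binomRem]
      push_cast
      ring
    rw [this]
    have h1 : (fun u : ℂ => 1 + u) =O[𝓝 0] fun _ => (1 : ℂ) :=
      (show ContinuousAt (fun u : ℂ => 1 + u) 0 by fun_prop).tendsto.isBigO_one ℂ
    exact ((h1.mul ih).congr_right fun u => one_mul _).add
      ((isBigO_refl _ _).const_mul_left _)

/-- The second-order remainder: `S^r` minus the terms of degree `≤ 2` of the expansion of
`t^{-r} (1 + u)^r` in powers of `u = t S - 1`, rewritten in terms of `S²`, `S` and `1`. The constant
term is cut off at `t = 1` so that its Mellin transform converges. -/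
noncomputable def remainder (r : ℕ) (t : ℝ) : ℂ :=
  (lambdaSeries t : ℂ) ^ r
    - (r * (r - 1) / 2 : ℂ) • ((t : ℂ) ^ (2 - r : ℂ) • (lambdaSeries t : ℂ) ^ 2)
    - (r - r * (r - 1) : ℂ) • ((t : ℂ) ^ (1 - r : ℂ) • (lambdaSeries t : ℂ) ^ 1)
    - (1 - r + r * (r - 1) / 2 : ℂ) • (Ioc 0 1).indicator (fun t : ℝ => (t : ℂ) ^ (-r : ℂ)) t

lemma remainder_eq (r : ℕ) {t : ℝ} (ht0 : 0 < t) (ht1 : t ≤ 1) :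
    remainder r t = (t : ℂ) ^ (-r : ℂ) * binomRem r (relError t) := by
  have ht : (t : ℂ) ≠ 0 := ofReal_ne_zero.2 ht0.ne'
  have hm : t ∈ Ioc (0 : ℝ) 1 := ⟨ht0, ht1⟩
  rw [remainder, indicator_of_mem hm, cpow_neg, cpow_sub _ _ ht, cpow_sub _ _ ht,
    cpow_one, cpow_ofNat, cpow_natCast, binomRem, relError]
  simp only [smul_eq_mul, add_sub_cancel, mul_pow]
  field_simp
  ring

/-- The remainder is `t^{-r} O(u³)` with `u = O(t^{2/5})`. -/
lemma isBigO_remainder_zero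
    (RH : ∀ ρ : ℂ, riemannZeta ρ = 0 → 0 < ρ.re → ρ.re < 1 → ρ.re = 1 / 2) (r : ℕ) :
    remainder r =O[𝓝[>] 0] fun t => t ^ (-(r - 6 / 5) : ℝ) := by
  have hu := isBigO_relError RH
  have h0 : Tendsto relError (𝓝[>] 0) (𝓝 0) := by
    refine hu.trans_tendsto ?_
    have : Tendsto (fun t : ℝ => t ^ (2 / 5 : ℝ)) (𝓝 0) (𝓝 (0 ^ (2 / 5 : ℝ))) :=
      (Real.continuousAt_rpow_const _ _ (Or.inr (by norm_num))).tendsto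
    rw [Real.zero_rpow (by norm_num)] at this
    exact this.mono_left nhdsWithin_le_nhds
  have h1 : (fun t : ℝ => (t : ℂ) ^ (-r : ℂ)) =O[𝓝[>] 0] fun t => t ^ (-r : ℝ) := by
    refine IsBigO.of_bound 1 ?_
    filter_upwards [self_mem_nhdsWithin] with t (ht : 0 < t)
    rw [norm_cpow_eq_rpow_re_of_pos ht, one_mul, Real.norm_of_nonneg (by positivity)]
    simp
  have h2 := h1.mul (((isBigO_binomRem r).comp_tendsto h0).trans (hu.pow 3))
  refine h2.congr' ?_ ?_
  · filter_upwards [Ioo_mem_nhdsGT (zero_lt_one' ℝ)] with t ht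
    exact (remainder_eq r ht.1 ht.2.le).symm
  · filter_upwards [self_mem_nhdsWithin] with t (ht : 0 < t)
    rw [← Real.rpow_natCast, ← Real.rpow_mul ht.le, ← Real.rpow_add ht]
    congr 1
    push_cast
    ring

lemma isBigO_lambdaSeries_pow_top {k : ℕ} (hk : 1 ≤ k) :
    (fun t => (lambdaSeries t : ℂ) ^ k) =O[atTop] fun t => Real.exp (-(1 / 2) * t) := by
  have h1 : (fun t => (lambdaSeries t : ℂ)) =O[atTop] fun t => Real.exp (-(1 / 2) * t) :=
    isBigO_ofReal_left.2 isBigO_lambdaSeries_top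
  refine (h1.pow k).trans (IsBigO.of_bound 1 ?_)
  filter_upwards [eventually_ge_atTop 0] with t ht
  rw [one_mul, norm_pow]
  refine pow_le_of_le_one (norm_nonneg _) ?_ (by lia)
  rw [Real.norm_of_nonneg (Real.exp_pos _).le, Real.exp_le_one_iff]
  linarith

lemma isBigO_cpow_smul_top {k r : ℕ} (hk : 1 ≤ k) (hkr : k ≤ r) :
    (fun t : ℝ => (t : ℂ) ^ (k - r : ℂ) • (lambdaSeries t : ℂ) ^ k)
      =O[atTop] fun t => Real.exp (-(1 / 2) * t) := by
  have h1 : (fun t : ℝ => (t : ℂ) ^ (k - r : ℂ)) =O[atTop] fun _ => (1 : ℝ) := by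
    refine IsBigO.of_bound 1 ?_
    filter_upwards [eventually_ge_atTop 1] with t ht
    rw [norm_cpow_eq_rpow_re_of_pos (by linarith)]
    have : (k : ℝ) ≤ r := by exact_mod_cast hkr
    simpa using Real.rpow_le_one_of_one_le_of_nonpos ht (by simpa using this)
  simpa using h1.smul (isBigO_lambdaSeries_pow_top hk)

lemma isBigO_remainder_top {r : ℕ} (hr : 3 ≤ r) :
    remainder r =O[atTop] fun t => Real.exp (-(1 / 2) * t) := by
  have hi : (Ioc (0 : ℝ) 1).indicator (fun t : ℝ => (t : ℂ) ^ (-r : ℂ))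
      =O[atTop] fun t => Real.exp (-(1 / 2) * t) := by
    refine (isBigO_zero _ _).congr' ?_ EventuallyEq.rfl
    filter_upwards [eventually_gt_atTop 1] with t ht
    rw [indicator_of_notMem]
    exact fun h => absurd h.2 (not_le.2 ht)
  have h2 := isBigO_cpow_smul_top (k := 2) (r := r) (by lia) (by lia)
  have h1 := isBigO_cpow_smul_top (k := 1) (r := r) (by lia) (by lia)
  rw [Nat.cast_ofNat] at h2
  rw [Nat.cast_one] at h1
  exact (((isBigO_lambdaSeries_pow_top (k := r) (by lia)).sub
    (h2.const_smul_left (r * (r - 1) / 2 : ℂ))).sub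
    (h1.const_smul_left (r - r * (r - 1) : ℂ))).sub
    (hi.const_smul_left (1 - r + r * (r - 1) / 2 : ℂ))

lemma continuousOn_cpow_Ioi (a : ℂ) : ContinuousOn (fun t : ℝ => (t : ℂ) ^ a) (Ioi 0) :=
  fun t (ht : 0 < t) => (continuousAt_ofReal_cpow_const t a (Or.inr ht.ne')).continuousWithinAt

lemma locallyIntegrableOn_remainder (r : ℕ) : LocallyIntegrableOn (remainder r) (Ioi 0) := by
  have h : ∀ (a : ℂ) (k : ℕ), LocallyIntegrableOn
      (fun t : ℝ => (t : ℂ) ^ a • (lambdaSeries t : ℂ) ^ k) (Ioi 0) := fun a k =>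
    ((continuousOn_cpow_Ioi a).smul ((continuous_ofReal.comp_continuousOn
      continuousOn_lambdaSeries).pow k)).locallyIntegrableOn measurableSet_Ioi
  have hi : LocallyIntegrableOn ((Ioc (0 : ℝ) 1).indicator fun t : ℝ => (t : ℂ) ^ (-r : ℂ))
      (Ioi 0) := by
    intro t ht
    obtain ⟨V, hV, hi⟩ := (continuousOn_cpow_Ioi (-r)).locallyIntegrableOn
      (μ := volume) measurableSet_Ioi t ht
    exact ⟨V, hV, hi.indicator measurableSet_Ioc⟩
  have key : remainder r = (fun t : ℝ => (lambdaSeries t : ℂ) ^ r)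
      - (r * (r - 1) / 2 : ℂ) • (fun t : ℝ => (t : ℂ) ^ (2 - r : ℂ) • (lambdaSeries t : ℂ) ^ 2)
      - (r - r * (r - 1) : ℂ) • (fun t : ℝ => (t : ℂ) ^ (1 - r : ℂ) • (lambdaSeries t : ℂ) ^ 1)
      - (1 - r + r * (r - 1) / 2 : ℂ) • (Ioc 0 1).indicator (fun t : ℝ => (t : ℂ) ^ (-r : ℂ)) := rfl
  rw [key]
  exact (((locallyIntegrableOn_lambdaSeries_pow r).sub
    ((locallyIntegrableOn_smul_iff _).2 (Or.inr (h _ 2)))).sub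
    ((locallyIntegrableOn_smul_iff _).2 (Or.inr (h _ 1)))).sub
    ((locallyIntegrableOn_smul_iff _).2 (Or.inr hi))

/-- The Mellin transform of the remainder is holomorphic past the line `Re s = r - 1`. -/
lemma differentiableAt_mellin_remainder
    (RH : ∀ ρ : ℂ, riemannZeta ρ = 0 → 0 < ρ.re → ρ.re < 1 → ρ.re = 1 / 2) {r : ℕ} (hr : 3 ≤ r)
    {s : ℂ} (hs : (r : ℝ) - 6 / 5 < s.re) : DifferentiableAt ℂ (mellin (remainder r)) s :=
  mellin_differentiableAt_of_isBigO_rpow_exp (a := 1 / 2) (by norm_num)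
    (locallyIntegrableOn_remainder r) (isBigO_remainder_top hr) (isBigO_remainder_zero RH r) hs

/-- Right of `Re s = r`, the remainder expresses `F_r` through `F₂`, `F₁ = -ζ'/ζ` and a simple pole. -/
lemma mellin_remainder
    (RH : ∀ ρ : ℂ, riemannZeta ρ = 0 → 0 < ρ.re → ρ.re < 1 → ρ.re = 1 / 2) {r : ℕ} (hr : 3 ≤ r)
    {s : ℂ} (hs : (r : ℝ) < s.re) :
    mellin (remainder r) s = Gamma s * goldbachF r s
      - (r * (r - 1) / 2) * (Gamma (s + (2 - r)) * goldbachF 2 (s + (2 - r)))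
      - (r - r * (r - 1)) * (Gamma (s + (1 - r)) * goldbachF 1 (s + (1 - r)))
      - (1 - r + r * (r - 1) / 2) * (1 / (s + -r)) := by
  have hconv : ∀ (k : ℕ) (z : ℂ), 1 ≤ k → (k : ℝ) < z.re →
      MellinConvergent (fun t => (lambdaSeries t : ℂ) ^ k) z := fun k z hk hz =>
    mellinConvergent_of_isBigO_rpow_exp (a := 1 / 2) (by norm_num)
      (locallyIntegrableOn_lambdaSeries_pow k) (isBigO_lambdaSeries_pow_top hk)
      (isBigO_lambdaSeries_inv RH k) hz
  have w2 : ((2 : ℕ) : ℝ) < (s + (2 - r)).re := by simp; linarith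
  have w1 : ((1 : ℕ) : ℝ) < (s + (1 - r)).re := by simp; linarith
  have m0 := hconv r s (by lia) hs
  have m2 := MellinConvergent.cpow_smul.2 (hconv 2 (s + (2 - r)) (by lia) w2)
  have m1 := MellinConvergent.cpow_smul.2 (hconv 1 (s + (1 - r)) (by lia) w1)
  have mi := hasMellin_cpow_Ioc (-r) (s := s) (by simp; linarith)
  have h := hasMellin_sub (hasMellin_sub (hasMellin_sub m0 (m2.const_smul (r * (r - 1) / 2 : ℂ))).1
    (m1.const_smul (r - r * (r - 1) : ℂ))).1 (mi.1.const_smul (1 - r + r * (r - 1) / 2 : ℂ))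
  refine h.2.trans ?_
  rw [(hasMellin_sub (hasMellin_sub m0 (m2.const_smul (r * (r - 1) / 2 : ℂ))).1
    (m1.const_smul (r - r * (r - 1) : ℂ))).2,
    (hasMellin_sub m0 (m2.const_smul (r * (r - 1) / 2 : ℂ))).2]
  rw [mellin_const_smul (fun t : ℝ => (t : ℂ) ^ (2 - r : ℂ) • (lambdaSeries t : ℂ) ^ 2),
    mellin_const_smul (fun t : ℝ => (t : ℂ) ^ (1 - r : ℂ) • (lambdaSeries t : ℂ) ^ 1),
    mellin_const_smul ((Ioc (0 : ℝ) 1).indicator fun t : ℝ => (t : ℂ) ^ (-r : ℂ)),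
    mellin_cpow_smul, mellin_cpow_smul, mi.2]
  simp only [smul_eq_mul]
  rw [mellin_lambdaSeries_pow (by lia) hs, mellin_lambdaSeries_pow (by lia) w2,
    mellin_lambdaSeries_pow (by lia) w1]

/-! ### A connected piece of the domain near the line -/

/-- Part of a connected open set `U` that meets both sides of the line `Re z = a` is a connected
open set lying to the right of `Re z = c`, for any `c < a`, and still reaching the line. -/
lemma exists_connected_subset {U : Set ℂ} (hU : IsOpen U) (hUc : IsConnected U) {z₀ z₁ : ℂ}
    {a c : ℝ} (hca : c < a) (h0 : z₀ ∈ U) (h0a : z₀.re = a) (h1 : z₁ ∈ U) (h1a : a < z₁.re) :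
    ∃ V ⊆ U, IsOpen V ∧ IsConnected V ∧ z₁ ∈ V ∧ (∃ z ∈ V, z.re = a) ∧ ∀ z ∈ V, c < z.re := by
  set F : Set ℂ := U ∩ {z | c < z.re} with hF
  have hFo : IsOpen F := hU.inter (isOpen_lt continuous_const continuous_re)
  have h1F : z₁ ∈ F := ⟨h1, hca.trans h1a⟩
  set V := connectedComponentIn F z₁ with hV
  have hVF : V ⊆ F := connectedComponentIn_subset F z₁
  have h1V : z₁ ∈ V := mem_connectedComponentIn h1F
  have hVc : IsPreconnected V := isPreconnected_connectedComponentIn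
  refine ⟨V, fun z hz => (hVF hz).1, hFo.connectedComponentIn, ⟨⟨z₁, h1V⟩, hVc⟩, h1V, ?_,
    fun z hz => (hVF hz).2⟩
  by_contra! hne
  -- If the component missed the line, it would stay in `Re z > a`, hence be clopen in `U`.
  have hright : ∀ z ∈ V, a < z.re := by
    intro z hz
    by_contra! hle
    obtain ⟨x, hx, hxa⟩ := hVc.intermediate_value hz h1V continuous_re.continuousOn
      (show a ∈ Icc z.re z₁.re from ⟨hle, h1a.le⟩)
    exact hne x hx hxa
  have hsub : U ⊆ V := by
    refine hUc.isPreconnected.subset_of_closure_inter_subset hFo.connectedComponentIn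
      ⟨z₁, h1, h1V⟩ ?_
    rintro z ⟨hzc, hzU⟩
    have hza : a ≤ z.re := closure_minimal (fun x hx => (hright x hx).le)
      (isClosed_le continuous_const continuous_re) hzc
    have hzF : z ∈ F := ⟨hzU, hca.trans_le hza⟩
    exact (hVc.subset_closure (subset_insert z V) (insert_subset hzc subset_closure)
      ).subset_connectedComponentIn (mem_insert_of_mem z h1V) (insert_subset hzF hVF)
        (mem_insert z V)
  exact hne z₀ (hsub h0) h0a

/-! ### The induced continuation of `F₂` -/

/-- Solving the Mellin identity for `F₂`: the function of `w` which continues `F₂` when `g`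
continues `F_r`, with `s = w + r - 2`. -/
noncomputable def continuation (r : ℕ) (g : ℂ → ℂ) (w : ℂ) : ℂ :=
  (Gamma (w + (r - 2)) * g (w + (r - 2)) - mellin (remainder r) (w + (r - 2))
    - (r - r * (r - 1)) * (Gamma w / (w - 1)
      * (1 / (w - 2) - deriv riemannZeta₁ (w - 1) / riemannZeta₁ (w - 1)))
    - (1 - r + r * (r - 1) / 2) * (1 / (w - 2))) / (r * (r - 1) / 2 * Gamma w)

lemma analyticAt_Gamma {s : ℂ} (hs : 0 < s.re) : AnalyticAt ℂ Gamma s := by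
  refine DifferentiableOn.analyticAt (s := {z | 0 < z.re}) (fun z hz => ?_)
    ((isOpen_lt continuous_const continuous_re).mem_nhds hs)
  refine (differentiableAt_Gamma z fun m hm => ?_).differentiableWithinAt
  have hz' : 0 < z.re := hz
  rw [hm] at hz'
  simp at hz'
  linarith [m.cast_nonneg (α := ℝ)]

lemma meromorphicAt_continuation
    (RH : ∀ ρ : ℂ, riemannZeta ρ = 0 → 0 < ρ.re → ρ.re < 1 → ρ.re = 1 / 2) {r : ℕ} (hr : 3 ≤ r)
    {g : ℂ → ℂ} {w : ℂ} (hw : 4 / 5 < w.re) (hg : MeromorphicAt g (w + (r - 2))) :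
    MeromorphicAt (continuation r g) w := by
  have hr' : (3 : ℝ) ≤ r := by exact_mod_cast hr
  have hre : (w + (r - 2)).re = w.re + (r - 2) := by simp
  have hsh : AnalyticAt ℂ (fun w : ℂ => w + (r - 2)) w := by fun_prop
  have hg' : MeromorphicAt (fun w => g (w + (r - 2))) w := by
    refine hg.comp_analyticAt (g := fun w : ℂ => w + (r - 2)) hsh
  have hG' : MeromorphicAt (fun w : ℂ => Gamma (w + (r - 2))) w :=
    (AnalyticAt.fun_comp_of_eq (analyticAt_Gamma (s := w + (r - 2)) (by rw [hre]; linarith))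
      hsh rfl).meromorphicAt
  have hG : MeromorphicAt Gamma w := (analyticAt_Gamma (by linarith)).meromorphicAt
  have hM : MeromorphicAt (fun w : ℂ => mellin (remainder r) (w + (r - 2))) w := by
    have : AnalyticAt ℂ (mellin (remainder r)) (w + (r - 2)) := by
      refine DifferentiableOn.analyticAt (s := {z | (r : ℝ) - 6 / 5 < z.re})
        (fun z hz => (differentiableAt_mellin_remainder RH hr hz).differentiableWithinAt)
        ((isOpen_lt continuous_const continuous_re).mem_nhds ?_)
      rw [mem_ofPred_eq, hre]
      linarith
    exact (AnalyticAt.fun_comp_of_eq this hsh rfl).meromorphicAt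
  have hsh1 : AnalyticAt ℂ (fun w : ℂ => w - 1) w := by fun_prop
  have hZ : MeromorphicAt (fun w => riemannZeta₁ (w - 1)) w :=
    (AnalyticAt.fun_comp_of_eq (differentiable_riemannZeta₁.analyticAt (w - 1))
      hsh1 rfl).meromorphicAt
  have hZ' : MeromorphicAt (fun w => deriv riemannZeta₁ (w - 1)) w :=
    (AnalyticAt.fun_comp_of_eq (differentiable_riemannZeta₁.analyticAt (w - 1)).deriv
      hsh1 rfl).meromorphicAt
  unfold continuation
  fun_prop

lemma continuation_eq
    (RH : ∀ ρ : ℂ, riemannZeta ρ = 0 → 0 < ρ.re → ρ.re < 1 → ρ.re = 1 / 2) {r : ℕ} (hr : 3 ≤ r)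
    {g : ℂ → ℂ} {w : ℂ} (hw : 2 < w.re) (hg : g (w + (r - 2)) = goldbachF r (w + (r - 2))) :
    continuation r g w = goldbachF 2 w := by
  have hr0 : (r : ℂ) ≠ 0 := by
    have : r ≠ 0 := by lia
    exact_mod_cast this
  have hr1 : (r : ℂ) - 1 ≠ 0 := by
    have : (r : ℂ) ≠ 1 := by
      have : r ≠ 1 := by lia
      exact_mod_cast this
    exact sub_ne_zero.2 this
  have hG : Gamma w ≠ 0 := Gamma_ne_zero_of_re_pos (by linarith)
  have hw1 : w - 1 ≠ 0 := by
    intro h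
    have := congrArg re h
    simp at this
    linarith
  have hΓ : Gamma w / (w - 1) = Gamma (w - 1) := by
    rw [div_eq_iff hw1, mul_comm, ← Gamma_add_one _ hw1, sub_add_cancel]
  have h := mellin_remainder RH hr (s := w + (r - 2)) (by simp; linarith)
  rw [show w + (r - 2) + (2 - r) = w by ring, show w + (r - 2) + (1 - r) = w - 1 by ring,
    show w + (r - 2) + -r = w - 2 by ring, goldbachF_one_eq (s := w - 1) (by simp; linarith)
      (zeta₁_ne_zero RH (by simp; linarith)), show w - 1 - 1 = w - 2 by ring] at h
  rw [continuation, hΓ, div_eq_iff (mul_ne_zero (div_ne_zero (mul_ne_zero hr0 hr1) two_ne_zero) hG), hg, h]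
  ring

end GoldbachBoundary

/-- assuming RH and that `Re s = 1` is a natural boundary for `F₂`, the line
`Re s = r − 1` is a natural boundary for `F_r` when `r ≥ 3`. -/
theorem goldbach_Fr_natural_boundary
    (r : ℕ) (hr : 3 ≤ r)
    (RH : ∀ ρ : ℂ, riemannZeta ρ = 0 → 0 < ρ.re → ρ.re < 1 → ρ.re = 1 / 2)
    (NB2 : ∀ s₀ : ℂ, s₀.re = 1 →
      ¬∃ (U : Set ℂ) (g : ℂ → ℂ), IsOpen U ∧ IsConnected U ∧ s₀ ∈ U ∧
        (U ∩ {s : ℂ | 2 < s.re}).Nonempty ∧ MeromorphicOn g U ∧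
        ∀ s ∈ U, 2 < s.re → g s = goldbachF 2 s) :
    ∀ s₀ : ℂ, s₀.re = (r : ℝ) - 1 →
      ¬∃ (U : Set ℂ) (g : ℂ → ℂ), IsOpen U ∧ IsConnected U ∧ s₀ ∈ U ∧
        (U ∩ {s : ℂ | (r : ℝ) < s.re}).Nonempty ∧ MeromorphicOn g U ∧
        ∀ s ∈ U, (r : ℝ) < s.re → g s = goldbachF r s := by
  rintro s₀ hs₀ ⟨U, g, hU, hUc, h0, ⟨s₁, h1, h1r⟩, hg, hgF⟩
  have h1r' : (r : ℝ) < s₁.re := h1r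
  obtain ⟨V, hVU, hV, hVc, h1V, ⟨z, hzV, hz⟩, hVre⟩ :=
    GoldbachBoundary.exists_connected_subset (a := (r : ℝ) - 1) (c := (r : ℝ) - 6 / 5) hU hUc
      (by linarith) h0 hs₀ h1 (by linarith)
  let e : ℂ ≃ₜ ℂ := Homeomorph.addRight ((r : ℂ) - 2)
  have hmem : ∀ x : ℂ, x ∈ V → x - (r - 2) ∈ e ⁻¹' V := fun x hx => by
    simpa [e] using hx
  refine NB2 (z - (r - 2)) (by simp [hz]; ring) ⟨e ⁻¹' V, GoldbachBoundary.continuation r g,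
    hV.preimage e.continuous, e.isConnected_preimage.2 hVc, hmem z hzV,
    ⟨s₁ - (r - 2), hmem s₁ h1V, by simp; linarith⟩, fun w hw => ?_, fun w hw hw2 => ?_⟩
  · have := hVre _ hw
    simp only [e, Homeomorph.coe_addRight, Complex.add_re, Complex.sub_re, Complex.natCast_re,
      Complex.re_ofNat] at this
    exact GoldbachBoundary.meromorphicAt_continuation RH hr (by linarith) (hg _ (hVU hw))
  · exact GoldbachBoundary.continuation_eq RH hr hw2
      (hgF _ (hVU hw) (by simp; linarith))
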